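/- A bounded linear operator on a Hilbert space is compact if and only if its range contains no infinite-dimensional closed subspace. -/

import Mathlib

lemma key1 {H : Type*} [NormedAddCommGroup H] [InnerProductSpace ℂ H]
    [CompleteSpace H] (A : H →L[ℂ] H) (hA : IsSelfAdjoint A) (ε : ℝ) : ∃ B : H →L[ℂ] H, IsSelfAdjoint B ∧
   0 ≤ B * (A - algebraMap ℝ _ ε) * B ∧ 0 ≤ algebraMap ℝ _ ε + B - A := by
  have hc : Continuous (fun t : ℝ => max (t-ε) 0) := by fun_prop
  have h1 : cfc (fun t : ℝ => t - ε) A = A - algebraMap ℝ _ ε := by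
    rw [cfc_sub (fun t : ℝ => t) (fun _ => ε) A, cfc_id' ℝ A, cfc_const ε A]
  refine ⟨cfc (fun t : ℝ => max (t-ε) 0) A, cfc_predicate _ A, ?_, ?_⟩
  · rw [← h1, ← cfc_mul _ _ A (by fun_prop) (by fun_prop), ← cfc_mul _ _ A (by fun_prop) (by fun_prop)]
    refine cfc_nonneg fun t _ => ?_
    rcases le_total (t - ε) 0 with h | h
    · simp [max_eq_right h]
    · simp only [max_eq_left h]; positivity
  · have : algebraMap ℝ _ ε + cfc (fun t : ℝ => max (t-ε) 0) A - A = 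
      cfc (fun t : ℝ => max (t-ε) 0) A - (A - algebraMap ℝ _ ε) := by abel
    rw [this, ← h1, ← cfc_sub _ _ A (by fun_prop) (by fun_prop)]
    refine cfc_nonneg fun t _ => ?_
    simp

lemma key2 {H : Type*} [NormedAddCommGroup H] [InnerProductSpace ℂ H]
    [CompleteSpace H] (T : H →L[ℂ] H) (ε : ℝ) : ∃ B : H →L[ℂ] H, IsSelfAdjoint B ∧
   (∀ x, ε * ‖B x‖^2 ≤ ‖T (B x)‖^2) ∧ ∀ x, B x = 0 → ‖T x‖^2 ≤ ε * ‖x‖^2 := by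
  obtain ⟨B, hB, h1, h2⟩ := key1 (star T * T) (IsSelfAdjoint.star_mul_self T) ε
  rw [ContinuousLinearMap.nonneg_iff_isPositive] at h1 h2
  have hT : ∀ y, RCLike.re (inner ℂ (star T (T y)) y) = ‖T y‖^2 := fun y => by
    rw [ContinuousLinearMap.star_eq_adjoint, ContinuousLinearMap.adjoint_inner_left]
    exact inner_self_eq_norm_sq _
  have hE : ∀ y : H, RCLike.re (inner ℂ ((algebraMap ℝ (H →L[ℂ] H) ε) y) y) = ε * ‖y‖^2 := fun y => by
    rw [Algebra.algebraMap_eq_smul_one]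
    simp [← inner_self_eq_norm_sq (𝕜 := ℂ) y]
  refine ⟨B, hB, fun x => ?_, fun x hx => ?_⟩
  · have := h1.re_inner_nonneg_left x
    have e : inner ℂ ((B * (star T * T - algebraMap ℝ _ ε) * B) x) x = 
       inner ℂ (star T (T (B x))) (B x) - inner ℂ ((algebraMap ℝ (H →L[ℂ] H) ε) (B x)) (B x) := by
      rw [← inner_sub_left]
      have hs : ∀ u v : H, inner ℂ (B u) v = inner ℂ u (B v) := fun u v => by
        conv_lhs => rw [← hB.star_eq, ContinuousLinearMap.star_eq_adjoint,
          ContinuousLinearMap.adjoint_inner_left]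
      exact hs _ _
    rw [e, map_sub, hT, hE] at this
    linarith
  · have := h2.re_inner_nonneg_left x
    have e : inner ℂ ((algebraMap ℝ _ ε + B - star T * T) x) x = 
       inner ℂ ((algebraMap ℝ (H →L[ℂ] H) ε) x) x - inner ℂ (star T (T x)) x := by
      rw [← inner_sub_left]
      congr 1
      change (algebraMap ℝ (H →L[ℂ] H) ε) x + B x - star T (T x) = _
      rw [hx, add_zero]
    rw [e, map_sub, hT, hE] at this
    linarith

lemma key3 {H : Type*} [NormedAddCommGroup H] [InnerProductSpace ℂ H]
    [CompleteSpace H] (T : H →L[ℂ] H) (δ : ℝ) (hδ : 0 < δ) (h : ∀ K : Submodule ℂ H, IsClosed (K : Set H) →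
        (K : Set H) ⊆ Set.range T → FiniteDimensional ℂ K) :
    ∃ F : H →L[ℂ] H, IsCompactOperator F ∧ ‖T - F‖ ≤ δ := by
  obtain ⟨B, hB, h1, h2⟩ := key2 T (δ^2)
  let M : Submodule ℂ H := (LinearMap.range (B : H →ₗ[ℂ] H)).topologicalClosure
  have hMc : IsClosed (M : Set H) := Submodule.isClosed_topologicalClosure _
  have : CompleteSpace M := hMc.completeSpace_coe
  have hM : ∀ x ∈ M, δ * ‖x‖ ≤ ‖T x‖ := by
    have hcl : IsClosed {x : H | δ * ‖x‖ ≤ ‖T x‖} := isClosed_le (by fun_prop) (by fun_prop)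
    have hsub : (LinearMap.range (B : H →ₗ[ℂ] H) : Set H) ⊆ {x : H | δ * ‖x‖ ≤ ‖T x‖} := by
      rintro _ ⟨x, rfl⟩
      have := h1 x
      rw [← mul_pow] at this
      exact le_of_sq_le_sq this (norm_nonneg _)
    intro x hx
    exact closure_minimal hsub hcl hx
  let S : M →L[ℂ] H := T.comp M.subtypeL
  have hS : AntilipschitzWith (Real.toNNReal δ⁻¹) S := by
    refine AddMonoidHomClass.antilipschitz_of_bound S fun x => ?_
    rw [Real.coe_toNNReal _ (by positivity), inv_mul_eq_div, le_div_iff₀ hδ, mul_comm]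
    exact hM x x.2
  have hfin : FiniteDimensional ℂ (LinearMap.range (S : M →ₗ[ℂ] H)) := by
    apply h
    · exact hS.isClosed_range S.uniformContinuous
    · rintro _ ⟨x, rfl⟩
      exact ⟨x, rfl⟩
  have : FiniteDimensional ℂ M :=
    (LinearEquiv.ofInjective (S : M →ₗ[ℂ] H) hS.injective).symm.finiteDimensional
  have : ProperSpace M := FiniteDimensional.proper ℂ M
  refine ⟨S.comp M.orthogonalProjectionOnto, ?_, ?_⟩
  · exact (isCompactOperator_of_locallyCompactSpace_rng S).comp_clm M.orthogonalProjectionOnto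
  · refine ContinuousLinearMap.opNorm_le_bound _ hδ.le fun x => ?_
    set y := x - M.starProjection x with hy
    have e : (T - S.comp M.orthogonalProjectionOnto) x = T y := by
      simp [S, hy]
    have hyM : y ∈ Mᗮ := M.sub_starProjection_mem_orthogonal x
    have hBy : B y = 0 := by
      have : y ∈ (LinearMap.range (B : H →ₗ[ℂ] H))ᗮ := 
        Submodule.orthogonal_le (Submodule.le_topologicalClosure _) hyM
      rw [ContinuousLinearMap.orthogonal_range, ← ContinuousLinearMap.star_eq_adjoint, hB.star_eq] at this
      exact this
    have h3 := h2 y hBy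
    rw [← mul_pow] at h3
    have h4 : ‖T y‖ ≤ δ * ‖y‖ := le_of_sq_le_sq h3 (by positivity)
    have h5 : ‖y‖ ≤ ‖x‖ := by
      have := M.norm_sq_eq_add_norm_sq_starProjection x
      rw [Submodule.starProjection_orthogonal_val] at this
      change _ = _ + ‖y‖ ^ 2 at this
      nlinarith [norm_nonneg x, norm_nonneg y, sq_nonneg ‖M.starProjection x‖]
    rw [e]
    exact h4.trans (by gcongr)

lemma key4 {H : Type*} [NormedAddCommGroup H] [InnerProductSpace ℂ H]
    [CompleteSpace H] (T : H →L[ℂ] H) (hT : IsCompactOperator T) (K : Submodule ℂ H)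
    (hK : IsClosed (K : Set H)) (hKT : (K : Set H) ⊆ Set.range T) : FiniteDimensional ℂ K := by
  let M : Submodule ℂ H := K.comap (T : H →ₗ[ℂ] H)
  have hMc : IsClosed (M : Set H) := hK.preimage T.continuous
  have : CompleteSpace M := hMc.completeSpace_coe
  have : CompleteSpace K := hK.completeSpace_coe
  let S : M →L[ℂ] K := (T.comp M.subtypeL).codRestrict K fun x => x.2
  have hSc : IsCompactOperator S := (hT.comp_clm M.subtypeL).codRestrict (fun x => x.2) hK
  have hs : Function.Surjective S := by
    rintro ⟨y, hy⟩
    obtain ⟨x, rfl⟩ := hKT hy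
    exact ⟨⟨x, hy⟩, rfl⟩
  obtain ⟨C, hC, hC'⟩ := hSc
  have hn : C ∈ nhds (0 : K) := by
    have := (S.isOpenMap hs).image_mem_nhds hC'
    rw [map_zero] at this
    exact Filter.mem_of_superset this (Set.image_preimage_subset _ _)
  have := hC.locallyCompactSpace_of_mem_nhds_of_addGroup hn
  exact FiniteDimensional.of_locallyCompactSpace ℂ

theorem stmt11 {H : Type*} [NormedAddCommGroup H] [InnerProductSpace ℂ H]
    [CompleteSpace H] (T : H →L[ℂ] H) :
    IsCompactOperator T ↔
      ∀ K : Submodule ℂ H, IsClosed (K : Set H) →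
        (K : Set H) ⊆ Set.range T → FiniteDimensional ℂ K := by
  refine ⟨key4 T, fun h => ?_⟩
  have hcl : IsClosed {f : H →L[ℂ] H | IsCompactOperator f} := isClosed_setOfPred_isCompactOperator
  have : T ∈ closure {f : H →L[ℂ] H | IsCompactOperator f} := by
    rw [Metric.mem_closure_iff]
    intro ε hε
    obtain ⟨F, hF, hn⟩ := key3 T (ε/2) (by positivity) h
    exact ⟨F, hF, by rw [dist_eq_norm]; linarith⟩
  rw [hcl.closure_eq] at this
  exact this
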